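/- Fix integers n ≥ 5, m ≥ 1, a real c, symmetric matrices H_1,…,H_m as in the context, and an integer k with 2 ≤ k ≤ ⌊n/2⌋. Suppose Ric − α(n,k,H,c)·I_n is positive semidefinite and that equality Θ_k = k(n−k)c holds. Then for each 1 ≤ α ≤ m there exist reals λ_α and μ_α such that H_α is the block diagonal matrix diag(λ_α·I_k, μ_α·I_{n−k}) (i.e., (H_α)_{ij} = 0 for i ≠ j, (H_α)_{ii} = λ_α for 1 ≤ i ≤ k, and (H_α)_{jj} = μ_α for k+1 ≤ j ≤ n); moreover Ric = α(n,k,H,c)·I_n. -/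

import Mathlib

open Finset

noncomputable def cF (n m : ℕ) (A : Fin m → Matrix (Fin n) (Fin n) ℝ) (a : Fin m) : ℝ :=
  (A a).trace / (n : ℝ)

noncomputable def HF (n m : ℕ) (A : Fin m → Matrix (Fin n) (Fin n) ℝ) : ℝ :=
  Real.sqrt (∑ a : Fin m, cF n m A a ^ 2)

noncomputable def RicF (n m : ℕ) (c : ℝ) (A : Fin m → Matrix (Fin n) (Fin n) ℝ) :
    Matrix (Fin n) (Fin n) ℝ :=
  (((n : ℝ) - 1) * c) • (1 : Matrix (Fin n) (Fin n) ℝ) +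
    ∑ a : Fin m, (((n : ℝ) * cF n m A a) • A a - A a * A a)

noncomputable def ThetaF (n m : ℕ) (A : Fin m → Matrix (Fin n) (Fin n) ℝ) (q : ℕ) : ℝ :=
  ∑ i ∈ Finset.univ.filter (fun i : Fin n => (i : ℕ) < q),
    ∑ j ∈ Finset.univ.filter (fun j : Fin n => q ≤ (j : ℕ)),
      (2 * ∑ a : Fin m, (A a i j) ^ 2 - ∑ a : Fin m, A a i i * A a j j)

noncomputable def alphaF (n k : ℕ) (H c : ℝ) : ℝ :=
  ((n : ℝ) - 1 -
      (k : ℝ) * ((n : ℝ) - (k : ℝ)) * ((n : ℝ) - 2) /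
        ((k : ℝ) * ((n : ℝ) - 2 * (k : ℝ)) + (n : ℝ) * ((k : ℝ) - 1) * ((n : ℝ) - (k : ℝ)))) *
    (c + H ^ 2)

/-!
Split the index set into a block `s` of size `p` and its complement of size `q`, and put
`n = p + q`. In these terms
`α = (p - 1) (q - 1) n² (c + H²) / (p² (q - 1) + q² (p - 1))`.
Weight the partial traces of `Ric - α` over the two blocks by `p (q - 1)` and `q (p - 1)`. In the
weighted sum the squares of the partial traces of the `H_α` cancel, and the products of the two
partial traces are absorbed by `Θ`. What is left is the identity

`p (q - 1) tr_s (Ric - α) + q (p - 1) tr_{sᶜ} (Ric - α) + p (q - 1) V_s + q (p - 1) V_{sᶜ}`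
`  + (2 p q + 4 - 3 n) B = (n - 2) (p q c - Θ)`,

where `B` is the squared norm of the `s × sᶜ` block and `V_s`, `V_{sᶜ}` measure how far the
diagonal blocks are from being scalar. Every coefficient on the left is positive, so equality in
`Θ ≤ p q c` makes all five terms vanish.
-/

section Blocks

variable {ι : Type*}

/-- The trace of the diagonal block of a matrix indexed by `s`. -/
def blockTrace (s : Finset ι) : Matrix ι ι ℝ →ₗ[ℝ] ℝ :=
  ∑ i ∈ s, Matrix.entryLinearMap ℝ ℝ i i

/-- The squared Frobenius norm of the `s × t` block of a matrix. -/
def blockSqNorm (s t : Finset ι) (M : Matrix ι ι ℝ) : ℝ :=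
  ∑ i ∈ s, ∑ j ∈ t, M i j ^ 2

/-- The squared Frobenius distance of the diagonal block indexed by `s` to the scalar matrix with
the same trace; it measures the failure of that block to be umbilical. -/
noncomputable def blockDefect [DecidableEq ι] (s : Finset ι) (M : Matrix ι ι ℝ) : ℝ :=
  blockSqNorm s s (M - (blockTrace s M / #s) • 1)

theorem blockTrace_apply (s : Finset ι) (M : Matrix ι ι ℝ) :
    blockTrace s M = ∑ i ∈ s, M i i := by
  simp [blockTrace]

theorem blockTrace_one [DecidableEq ι] (s : Finset ι) : blockTrace s 1 = #s := by
  simp [blockTrace_apply]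

theorem blockTrace_nonneg {M : Matrix ι ι ℝ} (hM : M.PosSemidef) (s : Finset ι) :
    0 ≤ blockTrace s M := by
  rw [blockTrace_apply]
  exact sum_nonneg fun _ _ => hM.diag_nonneg

theorem blockTrace_add_blockTrace_compl [Fintype ι] [DecidableEq ι] (s : Finset ι)
    (M : Matrix ι ι ℝ) : blockTrace s M + blockTrace sᶜ M = M.trace := by
  simp only [blockTrace_apply, sum_add_sum_compl, Matrix.trace, Matrix.diag_apply]

theorem blockSqNorm_nonneg (s t : Finset ι) (M : Matrix ι ι ℝ) : 0 ≤ blockSqNorm s t M :=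
  sum_nonneg fun _ _ => sum_nonneg fun _ _ => sq_nonneg _

theorem blockSqNorm_eq_zero_iff {s t : Finset ι} {M : Matrix ι ι ℝ} :
    blockSqNorm s t M = 0 ↔ ∀ i ∈ s, ∀ j ∈ t, M i j = 0 := by
  have row_nonneg : ∀ i ∈ s, 0 ≤ ∑ j ∈ t, M i j ^ 2 := fun _ _ => sum_nonneg fun _ _ => sq_nonneg _
  simp only [blockSqNorm, sum_eq_zero_iff_of_nonneg row_nonneg,
    sum_eq_zero_iff_of_nonneg fun _ _ => sq_nonneg (M _ _), sq_eq_zero_iff]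

theorem blockSqNorm_comm {M : Matrix ι ι ℝ} (hM : M.IsSymm) (s t : Finset ι) :
    blockSqNorm s t M = blockSqNorm t s M := by
  rw [blockSqNorm, sum_comm]
  exact sum_congr rfl fun i _ => sum_congr rfl fun j _ => by rw [hM.apply]

theorem blockDefect_nonneg [DecidableEq ι] (s : Finset ι) (M : Matrix ι ι ℝ) :
    0 ≤ blockDefect s M :=
  blockSqNorm_nonneg _ _ _

theorem blockDefect_eq_zero_iff [DecidableEq ι] {s : Finset ι} {M : Matrix ι ι ℝ} :
    blockDefect s M = 0 ↔
      ∀ i ∈ s, ∀ j ∈ s, M i j = if i = j then blockTrace s M / #s else 0 := by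
  simp [blockDefect, blockSqNorm_eq_zero_iff, sub_eq_zero, Matrix.one_apply]

theorem blockSqNorm_sub_smul_one [DecidableEq ι] (s : Finset ι) (M : Matrix ι ι ℝ) (x : ℝ) :
    blockSqNorm s s (M - x • 1) = blockSqNorm s s M - 2 * x * blockTrace s M + #s * x ^ 2 := by
  have row_sum : ∀ i ∈ s, ∑ j ∈ s, (M - x • 1) i j ^ 2 =
      ∑ j ∈ s, M i j ^ 2 - 2 * x * M i i + x ^ 2 := fun i hi => by
    have entry_sq : ∀ j, (M - x • 1) i j ^ 2 =
        M i j ^ 2 - if i = j then 2 * x * M i i - x ^ 2 else 0 := fun j => by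
      by_cases hij : i = j
      · subst hij
        simp only [Matrix.sub_apply, Matrix.smul_apply, Matrix.one_apply_eq, smul_eq_mul, if_true]
        ring
      · simp [hij]
    simp only [entry_sq, sum_sub_distrib, sum_ite_eq, if_pos hi]
    ring
  rw [blockSqNorm, sum_congr rfl row_sum, sum_add_distrib, sum_sub_distrib, ← mul_sum,
    sum_const, nsmul_eq_mul, ← blockTrace_apply, blockSqNorm]

theorem card_mul_blockDefect [DecidableEq ι] (s : Finset ι) (M : Matrix ι ι ℝ) :
    #s * blockDefect s M = #s * blockSqNorm s s M - blockTrace s M ^ 2 := by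
  rcases s.eq_empty_or_nonempty with rfl | hs
  · simp [blockTrace_apply]
  · have card_ne_zero : (#s : ℝ) ≠ 0 := by exact_mod_cast hs.card_ne_zero
    rw [blockDefect, blockSqNorm_sub_smul_one]
    field_simp
    ring

theorem blockTrace_mul_self [Fintype ι] [DecidableEq ι] {M : Matrix ι ι ℝ} (hM : M.IsSymm)
    (s : Finset ι) : blockTrace s (M * M) = blockSqNorm s s M + blockSqNorm s sᶜ M := by
  simp only [blockTrace_apply, blockSqNorm, ← sum_add_distrib, sum_add_sum_compl,
    Matrix.mul_apply, sq]
  simp only [fun i j => hM.apply i j]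

end Blocks

section Rigidity

variable {ι κ : Type*} [Fintype ι] [DecidableEq ι] [Fintype κ]

/-- The Ricci tensor that the Gauss equation assigns to the second fundamental form `A` in a space
of constant curvature `c`. The factor `n c_α` is written as the trace of `A α`. -/
def gaussRicci (c : ℝ) (A : κ → Matrix ι ι ℝ) : Matrix ι ι ℝ :=
  (((Fintype.card ι : ℝ) - 1) * c) • 1 + ∑ a, ((A a).trace • A a - A a * A a)

/-- The quantity `Θ` of a second fundamental form, for the splitting of the index set into `s` and
its complement. -/
def blockTheta (s : Finset ι) (A : κ → Matrix ι ι ℝ) : ℝ :=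
  ∑ a, (2 * blockSqNorm s sᶜ (A a) - blockTrace s (A a) * blockTrace sᶜ (A a))

/-- The lower Ricci bound `α` for the splitting of the index set into `s` and its complement, in a
form symmetric in the two blocks, with `n² H²` written as the sum of the squared traces. -/
noncomputable def ricciThreshold (s : Finset ι) (c : ℝ) (A : κ → Matrix ι ι ℝ) : ℝ :=
  ((#s : ℝ) - 1) * ((#sᶜ : ℝ) - 1) * ((Fintype.card ι : ℝ) ^ 2 * c + ∑ a, (A a).trace ^ 2) /
    ((#s : ℝ) ^ 2 * ((#sᶜ : ℝ) - 1) + (#sᶜ : ℝ) ^ 2 * ((#s : ℝ) - 1))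

theorem cast_card_eq_add_compl (s : Finset ι) :
    (Fintype.card ι : ℝ) = (#s : ℝ) + (#sᶜ : ℝ) := by
  exact_mod_cast (card_add_card_compl s).symm

theorem weighted_blockTrace_trace_smul_sub_mul_self {M : Matrix ι ι ℝ} (hM : M.IsSymm)
    (s : Finset ι) :
    (#s : ℝ) * (#sᶜ - 1) * blockTrace s (M.trace • M - M * M) +
        #sᶜ * (#s - 1) * blockTrace sᶜ (M.trace • M - M * M) =
      (#s - 1) * (#sᶜ - 1) * M.trace ^ 2 -
        (#s + #sᶜ - 2) *
          (2 * blockSqNorm s sᶜ M - blockTrace s M * blockTrace sᶜ M) -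
        (2 * #s * #sᶜ + 4 - 3 * (#s + #sᶜ)) * blockSqNorm s sᶜ M -
        #s * (#sᶜ - 1) * blockDefect s M - #sᶜ * (#s - 1) * blockDefect sᶜ M := by
  simp only [map_sub, map_smul, smul_eq_mul, blockTrace_mul_self hM, compl_compl,
    blockSqNorm_comm hM sᶜ s, ← blockTrace_add_blockTrace_compl s M]
  linear_combination
    ((#sᶜ : ℝ) - 1) * card_mul_blockDefect s M + ((#s : ℝ) - 1) * card_mul_blockDefect sᶜ M

theorem weighted_blockTrace_gaussRicci {A : κ → Matrix ι ι ℝ} (hA : ∀ a, (A a).IsSymm)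
    (s : Finset ι) (c : ℝ) :
    (#s : ℝ) * (#sᶜ - 1) * blockTrace s (gaussRicci c A) +
        #sᶜ * (#s - 1) * blockTrace sᶜ (gaussRicci c A) =
      (#s - 1) * (#sᶜ - 1) * ((#s + #sᶜ) ^ 2 * c + ∑ a, (A a).trace ^ 2) +
        (#s + #sᶜ - 2) * (#s * #sᶜ * c - blockTheta s A) -
        (2 * #s * #sᶜ + 4 - 3 * (#s + #sᶜ)) * ∑ a, blockSqNorm s sᶜ (A a) -
        #s * (#sᶜ - 1) * ∑ a, blockDefect s (A a) -
        #sᶜ * (#s - 1) * ∑ a, blockDefect sᶜ (A a) := by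
  have sum_over_family := sum_congr rfl fun a (_ : a ∈ univ) =>
    weighted_blockTrace_trace_smul_sub_mul_self (hA a) s
  simp only [sum_add_distrib, sum_sub_distrib, ← mul_sum] at sum_over_family
  simp only [blockTheta, sum_sub_distrib, ← mul_sum]
  simp only [gaussRicci, map_add, map_smul, map_sum, blockTrace_one, smul_eq_mul,
    cast_card_eq_add_compl s]
  linear_combination sum_over_family

theorem weighted_blockTrace_gaussRicci_sub_threshold {A : κ → Matrix ι ι ℝ}
    (hA : ∀ a, (A a).IsSymm) {s : Finset ι} (hs : 2 ≤ #s) (hs' : 2 ≤ #sᶜ) (c : ℝ) :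
    (#s : ℝ) * (#sᶜ - 1) * blockTrace s (gaussRicci c A - ricciThreshold s c A • 1) +
        #sᶜ * (#s - 1) * blockTrace sᶜ (gaussRicci c A - ricciThreshold s c A • 1) +
        #s * (#sᶜ - 1) * ∑ a, blockDefect s (A a) +
        #sᶜ * (#s - 1) * ∑ a, blockDefect sᶜ (A a) +
        (2 * #s * #sᶜ + 4 - 3 * (#s + #sᶜ)) * ∑ a, blockSqNorm s sᶜ (A a) =
      (#s + #sᶜ - 2) * (#s * #sᶜ * c - blockTheta s A) := by
  have hp : (2 : ℝ) ≤ #s := by exact_mod_cast hs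
  have hq : (2 : ℝ) ≤ #sᶜ := by exact_mod_cast hs'
  have denom_ne_zero : (#s : ℝ) ^ 2 * (#sᶜ - 1) + (#sᶜ : ℝ) ^ 2 * (#s - 1) ≠ 0 := by
    have : (0 : ℝ) < #s - 1 := by linarith
    have : (0 : ℝ) < #sᶜ - 1 := by linarith
    positivity
  have threshold_mul_denom := div_mul_cancel₀
    (((#s : ℝ) - 1) * (#sᶜ - 1) * ((#s + #sᶜ) ^ 2 * c + ∑ a, (A a).trace ^ 2)) denom_ne_zero
  rw [← cast_card_eq_add_compl, ← ricciThreshold, cast_card_eq_add_compl s] at threshold_mul_denom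
  simp only [map_sub, map_smul, smul_eq_mul, blockTrace_one]
  linear_combination weighted_blockTrace_gaussRicci hA s c - threshold_mul_denom

theorem gaussRicci_eq_and_defects_eq_zero_of_blockTheta_eq {A : κ → Matrix ι ι ℝ}
    (hA : ∀ a, (A a).IsSymm) {s : Finset ι} (hs : 2 ≤ #s) (hs' : 2 ≤ #sᶜ)
    (hcard : 5 ≤ Fintype.card ι) {c : ℝ}
    (hRic : (gaussRicci c A - ricciThreshold s c A • (1 : Matrix ι ι ℝ)).PosSemidef)
    (hTheta : blockTheta s A = #s * #sᶜ * c) :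
    gaussRicci c A = ricciThreshold s c A • (1 : Matrix ι ι ℝ) ∧
      ∀ a, blockDefect s (A a) = 0 ∧ blockDefect sᶜ (A a) = 0 ∧ blockSqNorm s sᶜ (A a) = 0 := by
  have hp : (2 : ℝ) ≤ #s := by exact_mod_cast hs
  have hq : (2 : ℝ) ≤ #sᶜ := by exact_mod_cast hs'
  have hpq : (5 : ℝ) ≤ #s + #sᶜ := by rw [← cast_card_eq_add_compl]; exact_mod_cast hcard
  have weight_pos : (0 : ℝ) < #s * (#sᶜ - 1) := mul_pos (by linarith) (by linarith)
  have weight_compl_pos : (0 : ℝ) < #sᶜ * (#s - 1) := mul_pos (by linarith) (by linarith)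
  -- The weight equals `2 (p - 2) (q - 2) + (n - 4)`.
  have cross_weight_pos : (0 : ℝ) < 2 * #s * #sᶜ + 4 - 3 * (#s + #sᶜ) := by
    linarith [mul_nonneg (sub_nonneg.2 hp) (sub_nonneg.2 hq)]
  have defect_nonneg (t : Finset ι) (a : κ) (_ : a ∈ univ) := blockDefect_nonneg t (A a)
  have cross_nonneg (a : κ) (_ : a ∈ univ) := blockSqNorm_nonneg s sᶜ (A a)
  have ricci_term := mul_nonneg weight_pos.le (blockTrace_nonneg hRic s)
  have ricci_compl_term := mul_nonneg weight_compl_pos.le (blockTrace_nonneg hRic sᶜ)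
  have defect_term := mul_nonneg weight_pos.le (sum_nonneg (defect_nonneg s))
  have defect_compl_term := mul_nonneg weight_compl_pos.le (sum_nonneg (defect_nonneg sᶜ))
  have cross_term := mul_nonneg cross_weight_pos.le (sum_nonneg cross_nonneg)
  have identity := weighted_blockTrace_gaussRicci_sub_threshold hA hs hs' c
  rw [hTheta, sub_self, mul_zero] at identity
  have eq_zero_of_weighted {w x : ℝ} (hw : 0 < w) (hx : 0 ≤ x) (hwx : w * x ≤ 0) : x = 0 :=
    (nonpos_of_mul_nonpos_right hwx hw).antisymm hx
  have ricci_zero := eq_zero_of_weighted weight_pos (blockTrace_nonneg hRic s) (by linarith)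
  have ricci_compl_zero :=
    eq_zero_of_weighted weight_compl_pos (blockTrace_nonneg hRic sᶜ) (by linarith)
  have defect_zero :=
    eq_zero_of_weighted weight_pos (sum_nonneg (defect_nonneg s)) (by linarith)
  have defect_compl_zero :=
    eq_zero_of_weighted weight_compl_pos (sum_nonneg (defect_nonneg sᶜ)) (by linarith)
  have cross_zero := eq_zero_of_weighted cross_weight_pos (sum_nonneg cross_nonneg) (by linarith)
  refine ⟨sub_eq_zero.1 (hRic.trace_eq_zero_iff.1 ?_), fun a => ⟨?_, ?_, ?_⟩⟩
  · rw [← blockTrace_add_blockTrace_compl s, ricci_zero, ricci_compl_zero, add_zero]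
  · exact (sum_eq_zero_iff_of_nonneg (defect_nonneg s)).1 defect_zero a (mem_univ a)
  · exact (sum_eq_zero_iff_of_nonneg (defect_nonneg sᶜ)).1 defect_compl_zero a (mem_univ a)
  · exact (sum_eq_zero_iff_of_nonneg cross_nonneg).1 cross_zero a (mem_univ a)

theorem exists_scalar_blocks_of_defects_eq_zero {M : Matrix ι ι ℝ} (hM : M.IsSymm) {s : Finset ι}
    (hdefect : blockDefect s M = 0) (hdefect_compl : blockDefect sᶜ M = 0)
    (hcross : blockSqNorm s sᶜ M = 0) :
    ∃ lam mu : ℝ, (∀ i j, i ≠ j → M i j = 0) ∧ (∀ i ∈ s, M i i = lam) ∧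
      (∀ j ∉ s, M j j = mu) := by
  rw [blockDefect_eq_zero_iff] at hdefect hdefect_compl
  rw [blockSqNorm_eq_zero_iff] at hcross
  simp only [mem_compl] at hdefect_compl hcross
  refine ⟨blockTrace s M / #s, blockTrace sᶜ M / #sᶜ, fun i j hij => ?_,
    fun i hi => (hdefect i hi i hi).trans (if_pos rfl),
    fun j hj => (hdefect_compl j hj j hj).trans (if_pos rfl)⟩
  by_cases hi : i ∈ s <;> by_cases hj : j ∈ s
  · exact (hdefect i hi j hj).trans (if_neg hij)
  · exact hcross i hi j hj
  · rw [← hM.apply]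
    exact hcross j hj i hi
  · exact (hdefect_compl i hi j hj).trans (if_neg hij)

theorem stmt_13_general (c : ℝ) (A : κ → Matrix ι ι ℝ) (hA : ∀ a, (A a).IsSymm)
    (hcard : 5 ≤ Fintype.card ι) (s : Finset ι) (hs : 2 ≤ #s) (hs' : 2 ≤ #sᶜ)
    (hRic : (gaussRicci c A - ricciThreshold s c A • (1 : Matrix ι ι ℝ)).PosSemidef)
    (hTheta : blockTheta s A = #s * #sᶜ * c) :
    (∀ a, ∃ lam mu : ℝ, (∀ i j, i ≠ j → A a i j = 0) ∧ (∀ i ∈ s, A a i i = lam) ∧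
      (∀ j ∉ s, A a j j = mu)) ∧
    gaussRicci c A = ricciThreshold s c A • (1 : Matrix ι ι ℝ) := by
  obtain ⟨hEinstein, hdefects⟩ :=
    gaussRicci_eq_and_defects_eq_zero_of_blockTheta_eq hA hs hs' hcard hRic hTheta
  refine ⟨fun a => ?_, hEinstein⟩
  obtain ⟨hdefect, hdefect_compl, hcross⟩ := hdefects a
  exact exists_scalar_blocks_of_defects_eq_zero (hA a) hdefect hdefect_compl hcross

end Rigidity

section InitialSegment

/-- The first `k` indices; the zero-based condition `i < k` is the `1 ≤ i ≤ k` of the paper. -/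
def initialBlock (n k : ℕ) : Finset (Fin n) := {i | (i : ℕ) < k}

variable {n m k : ℕ} (A : Fin m → Matrix (Fin n) (Fin n) ℝ)

theorem mem_initialBlock {i : Fin n} : i ∈ initialBlock n k ↔ (i : ℕ) < k := by
  simp [initialBlock]

theorem compl_initialBlock : (initialBlock n k)ᶜ = ({i | k ≤ (i : ℕ)} : Finset (Fin n)) := by
  ext i
  simp [mem_initialBlock]

theorem card_initialBlock (hk : k ≤ n) : #(initialBlock n k) = k := by
  rw [initialBlock, Fin.card_filter_val_lt, min_eq_right hk]

theorem card_compl_initialBlock (hk : k ≤ n) : #(initialBlock n k)ᶜ = n - k := by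
  rw [card_compl, Fintype.card_fin, card_initialBlock hk]

theorem natCast_mul_cF (hn : n ≠ 0) (a : Fin m) : (n : ℝ) * cF n m A a = (A a).trace :=
  mul_div_cancel₀ _ (Nat.cast_ne_zero.2 hn)

theorem sq_natCast_mul_sq_HF (hn : n ≠ 0) :
    (n : ℝ) ^ 2 * HF n m A ^ 2 = ∑ a, (A a).trace ^ 2 := by
  rw [HF, Real.sq_sqrt (sum_nonneg fun _ _ => sq_nonneg _), mul_sum]
  exact sum_congr rfl fun a _ => by rw [← mul_pow, natCast_mul_cF A hn]

theorem RicF_eq_gaussRicci (hn : n ≠ 0) (c : ℝ) : RicF n m c A = gaussRicci c A := by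
  simp only [RicF, gaussRicci, natCast_mul_cF A hn, Fintype.card_fin]

theorem ThetaF_eq_blockTheta : ThetaF n m A k = blockTheta (initialBlock n k) A := by
  have sum_theta : blockTheta (initialBlock n k) A =
      ∑ a, ∑ i ∈ initialBlock n k, ∑ j ∈ (initialBlock n k)ᶜ,
        (2 * A a i j ^ 2 - A a i i * A a j j) := by
    simp only [blockTheta, blockSqNorm, blockTrace_apply, sum_mul_sum]
    simp only [mul_sum, sum_sub_distrib]
  rw [sum_theta, sum_comm, compl_initialBlock, initialBlock, ThetaF]
  simp only [mul_sum, ← sum_sub_distrib]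
  exact sum_congr rfl fun i _ => sum_comm

theorem alphaF_eq_ricciThreshold (hk : 2 ≤ k) (hkn : k + 2 ≤ n) (c : ℝ) :
    alphaF n k (HF n m A) c = ricciThreshold (initialBlock n k) c A := by
  have hp : (2 : ℝ) ≤ k := by exact_mod_cast hk
  have hq : (k : ℝ) + 2 ≤ n := by exact_mod_cast hkn
  have denom_eq : (k : ℝ) * (n - 2 * k) + n * (k - 1) * (n - k) =
      (k : ℝ) ^ 2 * (n - k - 1) + (n - k) ^ 2 * (k - 1) := by ring
  have denom_ne_zero : (k : ℝ) ^ 2 * (n - k - 1) + (n - k) ^ 2 * (k - 1) ≠ 0 := by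
    have : (0 : ℝ) < n - k - 1 := by linarith
    have : (0 : ℝ) < k - 1 := by linarith
    positivity
  rw [alphaF, ricciThreshold, card_initialBlock (by omega), card_compl_initialBlock (by omega),
    Nat.cast_sub (by omega), Fintype.card_fin, ← sq_natCast_mul_sq_HF A (by omega), denom_eq]
  field_simp
  ring

end InitialSegment

theorem stmt_13 (n m : ℕ) (hn : 5 ≤ n) (hm : 1 ≤ m) (c : ℝ)
    (A : Fin m → Matrix (Fin n) (Fin n) ℝ) (hA : ∀ a : Fin m, (A a).IsSymm)
    (k : ℕ) (hk : 2 ≤ k) (hk' : k ≤ n / 2)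
    (hRic : (RicF n m c A -
        alphaF n k (HF n m A) c • (1 : Matrix (Fin n) (Fin n) ℝ)).PosSemidef)
    (heq : ThetaF n m A k = (k : ℝ) * ((n : ℝ) - (k : ℝ)) * c) :
    (∀ a : Fin m, ∃ lam mu : ℝ,
      (∀ i j : Fin n, i ≠ j → A a i j = 0) ∧
      (∀ i : Fin n, (i : ℕ) < k → A a i i = lam) ∧
      (∀ j : Fin n, k ≤ (j : ℕ) → A a j j = mu)) ∧
    RicF n m c A = alphaF n k (HF n m A) c • (1 : Matrix (Fin n) (Fin n) ℝ) := by
  have hkn : k + 2 ≤ n := by omega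
  have hcard : #(initialBlock n k) = k := card_initialBlock (by omega)
  have hcard' : #(initialBlock n k)ᶜ = n - k := card_compl_initialBlock (by omega)
  rw [ThetaF_eq_blockTheta] at heq
  rw [RicF_eq_gaussRicci A (by omega), alphaF_eq_ricciThreshold A hk hkn] at hRic ⊢
  simpa [mem_initialBlock] using stmt_13_general c A hA (by simpa) (initialBlock n k)
    (by omega) (by omega) hRic (by rw [heq, hcard, hcard', Nat.cast_sub (by omega)])
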